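/- Suppose (b,x₁) ≠ (1,1). Then the Lengyel transfer game L(b;x₁,0;1,1) has diagonal periodicity: SG*(x,y) = SG*(x + x₁ + 1, y − 1) for all (x,y) ∈ ℕ×ℕ with y ≥ 1. -/

import Mathlib

/-- The minimum excludant of a set of naturals: the least natural number not in the set. -/
noncomputable def mex (S : Set ℕ) : ℕ := sInf {n : ℕ | n ∉ S}

/-- `SG` is the Sprague–Grundy function of the Lengyel transfer game `L(b; x₁,y₁; x₂,y₂)`:
from `(x,y)` one may move to `(x, y−b)` (when `y ≥ b`), to `(x−x₁, y+y₁)` (when `x ≥ x₁`),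
or to `(x−x₂, y+y₂)` (when `x ≥ x₂`), and `SG` satisfies the mex recurrence. -/
def IsLengyelSG (b x1 y1 x2 y2 : ℕ) (SG : ℕ → ℕ → ℕ) : Prop :=
  ∀ x y : ℕ, SG x y = mex
    ((if b ≤ y then ({SG x (y - b)} : Set ℕ) else ∅) ∪
     (if x1 ≤ x then ({SG (x - x1) (y + y1)} : Set ℕ) else ∅) ∪
     (if x2 ≤ x then ({SG (x - x2) (y + y2)} : Set ℕ) else ∅))

/-!
Without the move `(x, y) ↦ (x - x₁, y)` every play from `(x, y)` has length `x + ⌊(x + y) / b⌋`,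
so the Grundy value there is the parity `π(x, y)` of that number. In `L(b;x₁,0;1,1)` write
`x = e + (x₁ + 1) m` with `e ≤ x₁` and put `n = y + m`. Then `SG*(x, y)` is `π(e, n)`, except that
it is `2` when `e = x₁` and `π(x₁, n) = π(0, n)`. The shift to `(x + x₁ + 1, y - 1)` preserves `e`
and `n`. A formula bounded by `2` is `SG*` as soon as it satisfies the mex rule truncated at `2`;
the only delicate check is at `e = 0`, `m > 0`, where `(b, x₁) ≠ (1, 1)` is needed to find an
option of value `0`.
-/

section TruncatedMex

/-- `v` is the mex of `S` cut off at `t`: a value `v = t` only asserts that all of `0, …, t - 1` lie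
in `S`. -/
def IsTruncatedMex (t : ℕ) (S : Set ℕ) (v : ℕ) : Prop :=
  v ≤ t ∧ (∀ w < v, w ∈ S) ∧ (v < t → v ∉ S)

variable {t v : ℕ} {S T : Set ℕ}

theorem mex_notMem (hS : S.Finite) : mex S ∉ S :=
  Nat.sInf_mem hS.exists_notMem

theorem IsTruncatedMex.min_mex_eq (h : IsTruncatedMex t S v) (hS : S.Finite) :
    min (mex S) t = v := by
  obtain ⟨hvt, hbelow, hv⟩ := h
  have hle : v ≤ mex S := le_of_not_gt fun hlt => mex_notMem hS (hbelow _ hlt)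
  rcases hvt.lt_or_eq with hlt | rfl
  · have hge : mex S ≤ v := Nat.sInf_le (hv hlt)
    rw [hge.antisymm hle, min_eq_left hvt]
  · exact min_eq_right hle

theorem IsTruncatedMex.congr (h : IsTruncatedMex t S v) (hST : ∀ w < t, w ∈ S ↔ w ∈ T) :
    IsTruncatedMex t T v :=
  ⟨h.1, fun w hw => (hST w (hw.trans_le h.1)).1 (h.2.1 w hw),
    fun hv hmem => h.2.2 hv ((hST v hv).2 hmem)⟩

theorem min_grundy_eq_of_isTruncatedMex {α : Type*} {r : α → α → Prop}
    (hwf : WellFounded (Function.swap r)) (hfin : ∀ p, {q | r p q}.Finite) {g f : α → ℕ}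
    (hg : ∀ p, g p = mex (g '' {q | r p q}))
    (hf : ∀ p, IsTruncatedMex t (f '' {q | r p q}) (f p)) (p : α) :
    min (g p) t = f p := by
  induction p using hwf.induction with
  | _ p ih =>
    have hsame : ∀ w < t, ∀ q, r p q → (f q = w ↔ g q = w) := by
      intro w hw q hq
      have := ih q hq
      omega
    rw [hg p]
    refine ((hf p).congr fun w hw => ?_).min_mex_eq ((hfin p).image g)
    exact exists_congr fun q => and_congr_right (hsame w hw q)

end TruncatedMex

section Moves

/-- The legal moves of the Lengyel transfer game `L(b;x₁,y₁;x₂,y₂)`, from the first position to the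
second. -/
inductive LengyelMove (b x₁ y₁ x₂ y₂ : ℕ) : ℕ × ℕ → ℕ × ℕ → Prop
  | remove (x y : ℕ) : LengyelMove b x₁ y₁ x₂ y₂ (x, y + b) (x, y)
  | transfer_one (x y : ℕ) : LengyelMove b x₁ y₁ x₂ y₂ (x + x₁, y) (x, y + y₁)
  | transfer_two (x y : ℕ) : LengyelMove b x₁ y₁ x₂ y₂ (x + x₂, y) (x, y + y₂)

variable {b x₁ y₁ x₂ y₂ : ℕ}

theorem lengyelMove_iff {x y : ℕ} {q : ℕ × ℕ} :
    LengyelMove b x₁ y₁ x₂ y₂ (x, y) q ↔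
      (b ≤ y ∧ q = (x, y - b)) ∨ (x₁ ≤ x ∧ q = (x - x₁, y + y₁)) ∨
        (x₂ ≤ x ∧ q = (x - x₂, y + y₂)) := by
  constructor
  · rintro (_ | _ | _) <;> simp
  · rintro (⟨h, rfl⟩ | ⟨h, rfl⟩ | ⟨h, rfl⟩) <;> obtain ⟨z, rfl⟩ := Nat.exists_eq_add_of_le' h
    · simpa only [Nat.add_sub_cancel] using LengyelMove.remove x z
    · simpa only [Nat.add_sub_cancel] using LengyelMove.transfer_one z y
    · simpa only [Nat.add_sub_cancel] using LengyelMove.transfer_two z y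

theorem finite_setOf_lengyelMove (p : ℕ × ℕ) : {q | LengyelMove b x₁ y₁ x₂ y₂ p q}.Finite := by
  refine (Set.toFinite {(p.1, p.2 - b), (p.1 - x₁, p.2 + y₁), (p.1 - x₂, p.2 + y₂)}).subset ?_
  rintro q hq
  have := lengyelMove_iff.1 hq
  simp only [Set.mem_insert_iff, Set.mem_singleton_iff]
  tauto

theorem wellFounded_swap_lengyelMove (hb : 0 < b) (hx₁ : 0 < x₁) (hx₂ : 0 < x₂) :
    WellFounded (Function.swap (LengyelMove b x₁ y₁ x₂ y₂)) := by
  refine Subrelation.wf (r := Prod.Lex (· < ·) (· < ·)) ?_ (wellFounded_lt.prod_lex wellFounded_lt)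
  rintro q p (_ | _ | _)
  · exact Prod.Lex.right _ (Nat.lt_add_of_pos_right hb)
  · exact Prod.Lex.left _ _ (Nat.lt_add_of_pos_right hx₁)
  · exact Prod.Lex.left _ _ (Nat.lt_add_of_pos_right hx₂)

theorem IsLengyelSG.eq_mex_image {SG : ℕ → ℕ → ℕ} (hSG : IsLengyelSG b x₁ y₁ x₂ y₂ SG)
    (p : ℕ × ℕ) :
    Function.uncurry SG p =
      mex (Function.uncurry SG '' {q | LengyelMove b x₁ y₁ x₂ y₂ p q}) := by
  obtain ⟨x, y⟩ := p
  rw [Function.uncurry_apply_pair, hSG x y]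
  congr 1
  ext v
  simp only [Set.mem_image, Set.mem_ofPred_eq, lengyelMove_iff, or_and_right, exists_or, and_assoc,
    exists_and_left, exists_eq_left, Function.uncurry_apply_pair, Set.mem_union, or_assoc]
  split_ifs <;> simp [*, eq_comm]

end Moves

section ExplicitValue

/-- The parity of the length `x + ⌊(x + y) / b⌋` of every play from `(x, y)` when only the moves to
`(x, y - b)` and `(x - 1, y + 1)` are allowed. -/
def playParity (b x y : ℕ) : ℕ := (x + (x + y) / b) % 2

/-- The value of `SG*` in `L(b;k,0;1,1)` at every position `(e + (k + 1) * m, y)` with `e ≤ k`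
and `y + m = n`. -/
def residueValue (b k e n : ℕ) : ℕ :=
  if e = k ∧ playParity b k n = playParity b 0 n then 2 else playParity b e n

/-- The explicit formula for `SG*` in `L(b;k,0;1,1)`, valid for `(b, k) ≠ (1, 1)`. -/
def starValue (b k : ℕ) (p : ℕ × ℕ) : ℕ :=
  residueValue b k (p.1 % (k + 1)) (p.2 + p.1 / (k + 1))

variable {b k e n y : ℕ}

theorem playParity_le_one (b x y : ℕ) : playParity b x y ≤ 1 :=
  Nat.le_of_lt_succ (Nat.mod_lt _ two_pos)

theorem playParity_succ_left (b x y : ℕ) :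
    playParity b (x + 1) y = 1 - playParity b x (y + 1) := by
  unfold playParity
  rw [show x + 1 + y = x + (y + 1) by ring]
  omega

theorem playParity_add_right (hb : 0 < b) (x y : ℕ) :
    playParity b x (y + b) = 1 - playParity b x y := by
  unfold playParity
  rw [← add_assoc, Nat.add_div_right _ hb]
  omega

theorem playParity_zero_of_lt (h : y < b) : playParity b 0 y = 0 := by
  simp [playParity, Nat.div_eq_of_lt h]

theorem playParity_zero_eq_or_eq (hb : 1 < b) (y : ℕ) :
    playParity b 0 y = playParity b 0 (y + 1) ∨
      playParity b 0 (y + 1) = playParity b 0 (y + 2) := by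
  have hdvd : ¬ b ∣ y + 1 ∨ ¬ b ∣ y + 2 := by
    by_contra! h
    exact hb.ne' (Nat.dvd_one.1 ((Nat.dvd_add_right h.1).1 h.2))
  unfold playParity
  simp only [zero_add]
  refine hdvd.imp (fun h => ?_) fun h => ?_
  · rw [Nat.succ_div_of_not_dvd h]
  · rw [Nat.succ_div_of_not_dvd h]

theorem residueValue_of_lt (h : e < k) : residueValue b k e n = playParity b e n :=
  if_neg fun h' => h.ne h'.1

theorem eq_and_playParity_eq_of_residueValue_eq_two (h : residueValue b k e n = 2) :
    e = k ∧ playParity b k n = playParity b 0 n := by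
  have := playParity_le_one b e n
  unfold residueValue at h
  split_ifs at h with h'
  · exact h'
  · omega

theorem residueValue_eq_two_or_eq_playParity (b k e n : ℕ) :
    residueValue b k e n = 2 ∨ residueValue b k e n = playParity b e n :=
  ite_eq_or_eq _ _ _

theorem residueValue_zero_ne_residueValue_self (hk : 0 < k) :
    residueValue b k 0 n ≠ residueValue b k k n := by
  have := playParity_le_one b 0 n
  rw [residueValue_of_lt hk]
  unfold residueValue
  split_ifs with h
  · omega
  · exact fun h0 => h ⟨rfl, h0.symm⟩

theorem residueValue_ne_residueValue_succ (h : e < k) :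
    residueValue b k e (n + 1) ≠ residueValue b k (e + 1) n := by
  have hle := playParity_le_one b e (n + 1)
  have hsucc := playParity_succ_left b e n
  rw [residueValue_of_lt h]
  rcases residueValue_eq_two_or_eq_playParity b k (e + 1) n with h' | h' <;> omega

theorem residueValue_ne_residueValue_add (hb : 0 < b) (h : residueValue b k e (n + b) < 2) :
    residueValue b k e n ≠ residueValue b k e (n + b) := by
  have hadd := playParity_add_right hb e n
  rcases residueValue_eq_two_or_eq_playParity b k e n with h₁ | h₁ <;>
    rcases residueValue_eq_two_or_eq_playParity b k e (n + b) with h₂ | h₂ <;> omega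

theorem residueValue_one_or_residueValue_self_eq_zero (hb : 0 < b) (hk : 0 < k)
    (hbk : ¬(b = 1 ∧ k = 1)) (h : playParity b 0 (n + 1) = 1) :
    residueValue b k 1 n = 0 ∨ residueValue b k k (n + 1) = 0 := by
  have hone : playParity b 1 n = 0 := by rw [playParity_succ_left, h]
  rcases Nat.lt_or_ge 1 k with hk1 | hk1
  · exact Or.inl ((residueValue_of_lt hk1).trans hone)
  · obtain rfl : k = 1 := hk1.antisymm hk
    have hb1 : 1 < b := by omega
    have hone' : playParity b 1 (n + 1) = 1 - playParity b 0 (n + 2) :=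
      playParity_succ_left b 0 (n + 1)
    unfold residueValue
    rcases playParity_zero_eq_or_eq hb1 n with h' | h'
    · left
      rw [if_neg (by omega), hone]
    · right
      rw [if_neg (by omega)]
      omega

theorem starValue_add_mul (he : e ≤ k) (m y : ℕ) :
    starValue b k (e + (k + 1) * m, y) = residueValue b k e (y + m) := by
  have he' : e < k + 1 := Nat.lt_succ_of_le he
  simp only [starValue, Nat.add_mul_mod_self_left, Nat.mod_eq_of_lt he',
    Nat.add_mul_div_left _ _ k.succ_pos, Nat.div_eq_of_lt he', zero_add]

theorem exists_eq_add_succ_mul (k x : ℕ) : ∃ e m, e ≤ k ∧ x = e + (k + 1) * m :=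
  ⟨x % (k + 1), x / (k + 1), Nat.le_of_lt_succ (Nat.mod_lt _ k.succ_pos),
    (Nat.mod_add_div x (k + 1)).symm⟩

theorem starValue_diagonal (b k x y : ℕ) :
    starValue b k (x + (k + 1), y) = starValue b k (x, y + 1) := by
  simp only [starValue, Nat.add_mod_right, Nat.add_div_right _ k.succ_pos]
  rw [Nat.succ_eq_add_one, add_right_comm, ← add_assoc]

theorem starValue_le_two (b k : ℕ) (p : ℕ × ℕ) : starValue b k p ≤ 2 := by
  unfold starValue residueValue
  have := playParity_le_one b (p.1 % (k + 1)) (p.2 + p.1 / (k + 1))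
  split_ifs <;> omega

theorem starValue_ne_of_lengyelMove (hb : 0 < b) (hk : 0 < k) {p q : ℕ × ℕ}
    (hpq : LengyelMove b k 0 1 1 p q) (hp : starValue b k p < 2) :
    starValue b k q ≠ starValue b k p := by
  rcases hpq with ⟨x, y⟩ | ⟨x, y⟩ | ⟨x, y⟩ <;> obtain ⟨e, m, he, rfl⟩ := exists_eq_add_succ_mul k x
  · simp only [starValue_add_mul he, add_right_comm y b m] at hp ⊢
    exact residueValue_ne_residueValue_add hb hp
  · rw [starValue_add_mul he]
    cases e with
    | zero =>
      rw [show 0 + (k + 1) * m + k = k + (k + 1) * m by ring, starValue_add_mul le_rfl]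
      exact residueValue_zero_ne_residueValue_self hk
    | succ e =>
      rw [show e + 1 + (k + 1) * m + k = e + (k + 1) * (m + 1) by ring,
        starValue_add_mul (Nat.le_of_succ_le he)]
      exact (residueValue_ne_residueValue_succ he).symm
  · rw [starValue_add_mul he, add_right_comm y 1 m]
    rcases he.lt_or_eq with he' | rfl
    · rw [add_right_comm e _ 1, starValue_add_mul he']
      exact residueValue_ne_residueValue_succ he'
    · rw [show e + (e + 1) * m + 1 = 0 + (e + 1) * (m + 1) by ring,
        starValue_add_mul (Nat.zero_le e)]
      exact (residueValue_zero_ne_residueValue_self hk).symm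

theorem exists_lengyelMove_of_starValue_eq_two (hk : 0 < k) {p : ℕ × ℕ}
    (hp : starValue b k p = 2) {w : ℕ} (hw : w < 2) :
    ∃ q, LengyelMove b k 0 1 1 p q ∧ starValue b k q = w := by
  obtain ⟨x, y⟩ := p
  obtain ⟨e, m, he, rfl⟩ := exists_eq_add_succ_mul k x
  rw [starValue_add_mul he] at hp
  obtain ⟨rfl, hparity⟩ := eq_and_playParity_eq_of_residueValue_eq_two hp
  obtain ⟨e, rfl⟩ := Nat.exists_eq_add_one.2 hk
  have hle := playParity_le_one b e (y + m + 1)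
  have hsucc := playParity_succ_left b e (y + m)
  by_cases hw0 : w = playParity b 0 (y + m)
  · refine ⟨(0 + (e + 1 + 1) * m, y), ?_, ?_⟩
    · rw [show e + 1 + (e + 1 + 1) * m = 0 + (e + 1 + 1) * m + (e + 1) by ring]
      exact .transfer_one _ y
    · rw [starValue_add_mul (Nat.zero_le _), residueValue_of_lt hk, hw0]
  · refine ⟨(e + (e + 1 + 1) * m, y + 1), ?_, ?_⟩
    · rw [add_right_comm e 1]
      exact .transfer_two _ y
    · rw [starValue_add_mul e.le_succ, residueValue_of_lt e.lt_succ_self, add_right_comm]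
      omega

theorem exists_lengyelMove_of_starValue_zero_eq_one (hb : 0 < b) (hk : 0 < k)
    (h : starValue b k (0, y) = 1) :
    ∃ q, LengyelMove b k 0 1 1 (0, y) q ∧ starValue b k q = 0 := by
  have hstar : ∀ z, starValue b k (0, z) = playParity b 0 z := fun z =>
    (starValue_add_mul (Nat.zero_le k) 0 z).trans (residueValue_of_lt hk)
  rw [hstar] at h
  have hby : b ≤ y := by
    by_contra! hlt
    exact zero_ne_one ((playParity_zero_of_lt hlt).symm.trans h)
  obtain ⟨y, rfl⟩ := Nat.exists_eq_add_of_le' hby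
  rw [playParity_add_right hb] at h
  refine ⟨(0, y), .remove 0 y, ?_⟩
  rw [hstar]
  omega

theorem exists_lengyelMove_of_starValue_mul_succ_eq_one (hb : 0 < b) (hk : 0 < k)
    (hbk : ¬(b = 1 ∧ k = 1)) {m : ℕ} (h : starValue b k ((k + 1) * (m + 1), y) = 1) :
    ∃ q, LengyelMove b k 0 1 1 ((k + 1) * (m + 1), y) q ∧ starValue b k q = 0 := by
  rw [← zero_add ((k + 1) * (m + 1)), starValue_add_mul (Nat.zero_le k),
    residueValue_of_lt hk] at h
  rcases residueValue_one_or_residueValue_self_eq_zero hb hk hbk h with h | h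
  · refine ⟨(1 + (k + 1) * m, y), ?_, by rwa [starValue_add_mul hk]⟩
    rw [show (k + 1) * (m + 1) = 1 + (k + 1) * m + k by ring]
    exact .transfer_one _ y
  · refine ⟨(k + (k + 1) * m, y + 1), ?_, by rwa [starValue_add_mul le_rfl, add_right_comm]⟩
    rw [show (k + 1) * (m + 1) = k + (k + 1) * m + 1 by ring]
    exact .transfer_two _ y

theorem exists_lengyelMove_of_starValue_eq_one (hb : 0 < b) (hk : 0 < k) (hbk : ¬(b = 1 ∧ k = 1))
    {p : ℕ × ℕ} (hp : starValue b k p = 1) :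
    ∃ q, LengyelMove b k 0 1 1 p q ∧ starValue b k q = 0 := by
  obtain ⟨x, y⟩ := p
  obtain ⟨e, m, he, rfl⟩ := exists_eq_add_succ_mul k x
  rcases e with _ | e
  · rw [zero_add] at hp ⊢
    cases m with
    | zero => exact exists_lengyelMove_of_starValue_zero_eq_one hb hk hp
    | succ m => exact exists_lengyelMove_of_starValue_mul_succ_eq_one hb hk hbk hp
  · rw [starValue_add_mul he] at hp
    have hparity : playParity b (e + 1) (y + m) = 1 := by
      rcases residueValue_eq_two_or_eq_playParity b k (e + 1) (y + m) with h | h <;> omega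
    refine ⟨(e + (k + 1) * m, y + 1), ?_, ?_⟩
    · rw [add_right_comm e 1]
      exact .transfer_two _ y
    · have hle := playParity_le_one b e (y + m + 1)
      rw [playParity_succ_left] at hparity
      rw [starValue_add_mul (Nat.le_of_succ_le he), residueValue_of_lt he, add_right_comm]
      omega

theorem isTruncatedMex_starValue (hb : 0 < b) (hk : 0 < k) (hbk : ¬(b = 1 ∧ k = 1)) (p : ℕ × ℕ) :
    IsTruncatedMex 2 (starValue b k '' {q | LengyelMove b k 0 1 1 p q}) (starValue b k p) := by
  have hle := starValue_le_two b k p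
  refine ⟨hle, fun w hw => ?_, fun hp ⟨q, hpq, hq⟩ => starValue_ne_of_lengyelMove hb hk hpq hp hq⟩
  rcases hle.lt_or_eq with hlt | heq
  · obtain ⟨hp, rfl⟩ : starValue b k p = 1 ∧ w = 0 := by omega
    exact exists_lengyelMove_of_starValue_eq_one hb hk hbk hp
  · exact exists_lengyelMove_of_starValue_eq_two hk heq (hw.trans_le hle)

end ExplicitValue

theorem IsLengyelSG.min_two_eq_starValue {b k : ℕ} (hb : 0 < b) (hk : 0 < k)
    (hbk : ¬(b = 1 ∧ k = 1)) {SG : ℕ → ℕ → ℕ} (hSG : IsLengyelSG b k 0 1 1 SG) (x y : ℕ) :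
    min (SG x y) 2 = starValue b k (x, y) :=
  min_grundy_eq_of_isTruncatedMex (wellFounded_swap_lengyelMove hb hk one_pos)
    finite_setOf_lengyelMove hSG.eq_mex_image (isTruncatedMex_starValue hb hk hbk) (x, y)

/-- If `(b,x₁) ≠ (1,1)`, then `L(b;x₁,0;1,1)` has diagonal periodicity:
`SG*(x,y) = SG*(x+x₁+1, y−1)` for all `y ≥ 1`, where `SG* = min(SG, 2)`. -/
theorem diagonal_periodicity_L_b_x1_0_1_1 (b x1 : ℕ) (hb : 0 < b) (hx1 : 0 < x1)
    (hne : ¬ (b = 1 ∧ x1 = 1))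
    (SG : ℕ → ℕ → ℕ) (hSG : IsLengyelSG b x1 0 1 1 SG) :
    ∀ x y : ℕ, 1 ≤ y → min (SG x y) 2 = min (SG (x + x1 + 1) (y - 1)) 2 := by
  intro x y hy
  obtain ⟨y, rfl⟩ := Nat.exists_eq_add_of_le' hy
  rw [hSG.min_two_eq_starValue hb hx1 hne, hSG.min_two_eq_starValue hb hx1 hne,
    Nat.add_sub_cancel, add_assoc, starValue_diagonal]
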